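/- Let k₁, k₂ : ℝ × ℝ → ℝ be smooth functions satisfying (k₁)_t = (k₂)ₛₛ + ½(k₁² − k₂²)k₂ and (k₂)_t = (k₁)ₛₛ + ½(k₁² − k₂²)k₁. Then the pair of functions q = (1/√2)(k₁ + k₂) and r = (1/√2)(k₁ − k₂) is a solution of the non-linear heat system: q_t = q_ss + q²r and r_t = −r_ss − r²q. -/

import Mathlib

noncomputable section

open Real

/-- Minkowski 3-space: ℝ³ as a vector type. -/
abbrev V3 : Type := Fin 3 → ℝ

/-- Lorentzian inner product ⟨x,y⟩_L = −x₁y₁ + x₂y₂ + x₃y₃ on ℝ³. -/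
def lor (x y : V3) : ℝ := -(x 0 * y 0) + x 1 * y 1 + x 2 * y 2

/-- Lorentzian cross product x ×_L y = (x₃y₂ − x₂y₃, x₃y₁ − x₁y₃, x₁y₂ − x₂y₁). -/
def lcross (x y : V3) : V3 :=
  ![x 2 * y 1 - x 1 * y 2, x 2 * y 0 - x 0 * y 2, x 0 * y 1 - x 1 * y 0]

/-- Partial derivative with respect to the first variable `s`. -/
def pds {E : Type*} [NormedAddCommGroup E] [NormedSpace ℝ E]
    (f : ℝ × ℝ → E) (p : ℝ × ℝ) : E := deriv (fun s => f (s, p.2)) p.1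

/-- Partial derivative with respect to the second variable `t`. -/
def pdt {E : Type*} [NormedAddCommGroup E] [NormedSpace ℝ E]
    (f : ℝ × ℝ → E) (p : ℝ × ℝ) : E := deriv (fun t => f (p.1, t)) p.2

/-!
In the characteristic coordinates `u = k₁ + k₂` and `v = k₁ - k₂` the second-order part of the
system decouples, and `k₁² - k₂² = u v` turns the cubic terms into `½ u² v` and `-½ v² u`.
Scaling both unknowns by `c` divides the cubic coefficient by `c²`, so `c = 1/√2` makes it `1`.
-/

section PartialDerivatives

variable {E : Type*} [NormedAddCommGroup E] [NormedSpace ℝ E] {f g : ℝ × ℝ → E}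

theorem pds_const_smul (c : ℝ) (f : ℝ × ℝ → E) : pds (c • f) = c • pds f :=
  funext fun p => deriv_const_smul_field c fun s => f (s, p.2)

theorem pdt_const_smul (c : ℝ) (f : ℝ × ℝ → E) : pdt (c • f) = c • pdt f :=
  funext fun p => deriv_const_smul_field c fun t => f (p.1, t)

theorem pds_add (hf : Differentiable ℝ f) (hg : Differentiable ℝ g) :
    pds (f + g) = pds f + pds g :=
  funext fun _ => deriv_fun_add (by fun_prop) (by fun_prop)

theorem pds_sub (hf : Differentiable ℝ f) (hg : Differentiable ℝ g) :
    pds (f - g) = pds f - pds g :=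
  funext fun _ => deriv_fun_sub (by fun_prop) (by fun_prop)

theorem pdt_add (hf : Differentiable ℝ f) (hg : Differentiable ℝ g) :
    pdt (f + g) = pdt f + pdt g :=
  funext fun _ => deriv_fun_add (by fun_prop) (by fun_prop)

theorem pdt_sub (hf : Differentiable ℝ f) (hg : Differentiable ℝ g) :
    pdt (f - g) = pdt f - pdt g :=
  funext fun _ => deriv_fun_sub (by fun_prop) (by fun_prop)

theorem pds_eq_fderiv_apply {p : ℝ × ℝ} (hf : DifferentiableAt ℝ f p) :
    pds f p = fderiv ℝ f p (1, 0) :=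
  (hf.hasFDerivAt.comp_hasDerivAt p.1
    ((hasDerivAt_id p.1).prodMk (hasDerivAt_const p.1 p.2))).deriv

theorem contDiff_pds {m n : WithTop ℕ∞} (hf : ContDiff ℝ n f) (hmn : m + 1 ≤ n) :
    ContDiff ℝ m (pds f) := by
  have hf_diff : Differentiable ℝ f := (hf.of_le (le_add_self.trans hmn)).differentiable_one
  rw [show pds f = fun p => fderiv ℝ f p (1, 0) from
    funext fun p => pds_eq_fderiv_apply (hf_diff p)]
  exact (hf.fderiv_right hmn).clm_apply contDiff_const

theorem differentiable_pds (hf : ContDiff ℝ 2 f) : Differentiable ℝ (pds f) :=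
  (contDiff_pds hf one_add_one_eq_two.le).differentiable_one

theorem pds_pds_add (hf : ContDiff ℝ 2 f) (hg : ContDiff ℝ 2 g) :
    pds (pds (f + g)) = pds (pds f) + pds (pds g) := by
  rw [pds_add (hf.differentiable two_ne_zero) (hg.differentiable two_ne_zero),
    pds_add (differentiable_pds hf) (differentiable_pds hg)]

theorem pds_pds_sub (hf : ContDiff ℝ 2 f) (hg : ContDiff ℝ 2 g) :
    pds (pds (f - g)) = pds (pds f) - pds (pds g) := by
  rw [pds_sub (hf.differentiable two_ne_zero) (hg.differentiable two_ne_zero),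
    pds_sub (differentiable_pds hf) (differentiable_pds hg)]

end PartialDerivatives

section HeatSystem

variable {A : Type*} [NormedCommRing A] [NormedAlgebra ℝ A]

/-- The non-linear heat system `q_t = q_ss + μ q² r`, `r_t = -r_ss - μ r² q` with an arbitrary
coupling constant `μ`, so that rescaling the unknowns stays within the family. No regularity of
`q` and `r` is included. -/
structure SolvesHeatSystem (μ : ℝ) (q r : ℝ × ℝ → A) : Prop where
  pdt_fst : ∀ p, pdt q p = pds (pds q) p + μ • (q p ^ 2 * r p)
  pdt_snd : ∀ p, pdt r p = -pds (pds r) p - μ • (r p ^ 2 * q p)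

theorem SolvesHeatSystem.const_smul {μ c : ℝ} {q r : ℝ × ℝ → A}
    (h : SolvesHeatSystem (μ * c ^ 2) q r) : SolvesHeatSystem μ (c • q) (c • r) where
  pdt_fst p := by
    simp only [pdt_const_smul, pds_const_smul, Pi.smul_apply, h.pdt_fst]
    simp only [Algebra.smul_def, map_mul, map_pow]
    ring
  pdt_snd p := by
    simp only [pdt_const_smul, pds_const_smul, Pi.smul_apply, h.pdt_snd]
    simp only [Algebra.smul_def, map_mul, map_pow]
    ring

theorem solvesHeatSystem_add_sub {μ : ℝ} {k₁ k₂ : ℝ × ℝ → A}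
    (hk₁ : ContDiff ℝ 2 k₁) (hk₂ : ContDiff ℝ 2 k₂)
    (e₁ : ∀ p, pdt k₁ p = pds (pds k₂) p + μ • (k₁ p ^ 2 - k₂ p ^ 2) * k₂ p)
    (e₂ : ∀ p, pdt k₂ p = pds (pds k₁) p + μ • (k₁ p ^ 2 - k₂ p ^ 2) * k₁ p) :
    SolvesHeatSystem μ (k₁ + k₂) (k₁ - k₂) where
  pdt_fst p := by
    rw [pdt_add (hk₁.differentiable two_ne_zero) (hk₂.differentiable two_ne_zero),
      pds_pds_add hk₁ hk₂]
    simp only [Pi.add_apply, Pi.sub_apply, e₁, e₂, Algebra.smul_def]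
    ring
  pdt_snd p := by
    rw [pdt_sub (hk₁.differentiable two_ne_zero) (hk₂.differentiable two_ne_zero),
      pds_pds_sub hk₁ hk₂]
    simp only [Pi.add_apply, Pi.sub_apply, e₁, e₂, Algebra.smul_def]
    ring

theorem statement19_general {k₁ k₂ q r : ℝ × ℝ → A}
    (hk₁ : ContDiff ℝ 2 k₁) (hk₂ : ContDiff ℝ 2 k₂)
    (e₁ : ∀ p, pdt k₁ p = pds (pds k₂) p + (1 / 2 : ℝ) • (k₁ p ^ 2 - k₂ p ^ 2) * k₂ p)
    (e₂ : ∀ p, pdt k₂ p = pds (pds k₁) p + (1 / 2 : ℝ) • (k₁ p ^ 2 - k₂ p ^ 2) * k₁ p)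
    (hq : ∀ p, q p = (1 / √2) • (k₁ p + k₂ p)) (hr : ∀ p, r p = (1 / √2) • (k₁ p - k₂ p)) :
    (∀ p, pdt q p = pds (pds q) p + q p ^ 2 * r p) ∧
    (∀ p, pdt r p = -pds (pds r) p - r p ^ 2 * q p) := by
  obtain rfl : q = (1 / √2) • (k₁ + k₂) := funext hq
  obtain rfl : r = (1 / √2) • (k₁ - k₂) := funext hr
  have coupling : (1 / 2 : ℝ) = 1 * (1 / √2) ^ 2 := by norm_num [div_pow]
  rw [coupling] at e₁ e₂
  have h := (solvesHeatSystem_add_sub hk₁ hk₂ e₁ e₂).const_smul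
  exact ⟨by simpa only [one_smul] using h.pdt_fst, by simpa only [one_smul] using h.pdt_snd⟩

end HeatSystem

/-- If smooth `k₁, k₂ : ℝ × ℝ → ℝ` satisfy
`(k₁)_t = (k₂)ₛₛ + ½(k₁² − k₂²)k₂` and `(k₂)_t = (k₁)ₛₛ + ½(k₁² − k₂²)k₁`, then
`q = (1/√2)(k₁ + k₂)` and `r = (1/√2)(k₁ − k₂)` solve the nonlinear heat system
`q_t = q_ss + q²r`, `r_t = −r_ss − r²q`. -/
theorem statement19 (k₁ k₂ : ℝ × ℝ → ℝ)
    (hk₁ : ContDiff ℝ (⊤ : ℕ∞) k₁) (hk₂ : ContDiff ℝ (⊤ : ℕ∞) k₂)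
    (e₁ : ∀ p, pdt k₁ p = pds (pds k₂) p + (k₁ p ^ 2 - k₂ p ^ 2) / 2 * k₂ p)
    (e₂ : ∀ p, pdt k₂ p = pds (pds k₁) p + (k₁ p ^ 2 - k₂ p ^ 2) / 2 * k₁ p)
    (q r : ℝ × ℝ → ℝ)
    (hq : ∀ p, q p = (1 / Real.sqrt 2) * (k₁ p + k₂ p))
    (hr : ∀ p, r p = (1 / Real.sqrt 2) * (k₁ p - k₂ p)) :
    (∀ p, pdt q p = pds (pds q) p + q p ^ 2 * r p) ∧
    (∀ p, pdt r p = -(pds (pds r) p) - r p ^ 2 * q p) := by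
  exact statement19_general (contDiff_infty.1 hk₁ 2) (contDiff_infty.1 hk₂ 2)
    (by simpa only [smul_eq_mul, one_div_mul_eq_div] using e₁)
    (by simpa only [smul_eq_mul, one_div_mul_eq_div] using e₂) hq hr
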